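/- The real vector space consisting of germs at 0 of holomorphic 4-tuples (f, g, h, e) that are tangent to Q near 0 and satisfy f(0) = g(0) = h(0) = e(0) = 0 has dimension exactly 9. -/

import Mathlib

open Complex ComplexConjugate Filter Topology

/-- Coordinates on `ℂ⁴`: `p 0, p 1` are `z₁, z₂`; `p 2` is `ζ`; `p 3` is `w`. -/
abbrev E4 : Type := Fin 4 → ℂ

/-- The model hypersurface `Q = {Im w = 2 Re (z₁ ζ̄) + 2 Re (z₂ ζ̄²)} ⊆ ℂ⁴`. -/
def Q : Set E4 :=
  {p | (p 3).im = 2 * (p 0 * conj (p 2)).re + 2 * (p 1 * (conj (p 2)) ^ 2).re}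

/-- The 4-tuple `(f, g, h, e)` is tangent to `Q` on `U`. -/
def TangentOn (f g h e : E4 → ℂ) (U : Set E4) : Prop :=
  ∀ p ∈ Q ∩ U,
    (e p).im = 2 * (f p * conj (p 2) + g p * (conj (p 2)) ^ 2
      + h p * (conj (p 0) + 2 * conj (p 1) * p 2)).re

/-- Germs at `0 ∈ ℂ⁴` of complex-valued functions. -/
abbrev G4 : Type := Filter.Germ (𝓝 (0 : E4)) ℂ

/-- Germs at `0` of holomorphic 4-tuples tangent to `Q` near `0` and vanishing at `0`. -/
def tangentGerms0 : Set (G4 × G4 × G4 × G4) :=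
  {t | ∃ f g h e : E4 → ℂ, t = (↑f, ↑g, ↑h, ↑e) ∧
    f 0 = 0 ∧ g 0 = 0 ∧ h 0 = 0 ∧ e 0 = 0 ∧
    ∃ V : Set E4, IsOpen V ∧ (0 : E4) ∈ V ∧
      DifferentiableOn ℂ f V ∧ DifferentiableOn ℂ g V ∧
      DifferentiableOn ℂ h V ∧ DifferentiableOn ℂ e V ∧
      TangentOn f g h e V}

/-!
Polarization turns tangency into an identity between holomorphic functions on the complexification
`w - w' = 2i(z₁c + z₂c² + aζ + bζ²)` of `Q`, where `(a, b, c, w')` replaces the conjugate of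
`(z₁, z₂, ζ, w)`. Comparing first order terms at `(a, b, c) = 0` makes `f`, `h` and `e` polynomials
in `z₁` and `ζ` whose coefficients are functions of `w`. The identity is then compared at distinct
points with the same `w` and `w'`: solving `w - w' = 2i z₂c²` by `c` and `-c` separates the even
terms from the odd ones, and solving `w - w' = 2i(z₁c + z₂c²)` by `c` and `2c` eliminates `g`.
All the coefficients are thereby determined by nine real constants. Conversely, the resulting
polynomial tuples are tangent to `Q`: their polarized tangency defect is a multiple of the equation
of the complexified hypersurface.
-/

/-! ### Identity principles -/

section IdentityPrinciples

variable {V W : Type*} [NormedAddCommGroup V] [NormedSpace ℂ V]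
  [NormedAddCommGroup W] [NormedSpace ℂ W] [CompleteSpace W]

theorem eventually_eq_zero_of_isSelfAdjoint [StarAddMonoid V] [StarModule ℂ V] [ContinuousStar V]
    {F : V → W} (hF : ∀ᶠ x in 𝓝 0, DifferentiableAt ℂ F x)
    (hF0 : ∀ᶠ x in 𝓝 0, IsSelfAdjoint x → F x = 0) : ∀ᶠ x in 𝓝 0, F x = 0 := by
  obtain ⟨r, hr, hball⟩ := Metric.eventually_nhds_iff_ball.1 (hF.and hF0)
  have hsmall : ∀ᶠ x : V in 𝓝 0, ‖(realPart x : V)‖ + 2 * ‖(imaginaryPart x : V)‖ < r := by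
    simp only [realPart_apply_coe, imaginaryPart_apply_coe]
    exact ContinuousAt.eventually_lt (by fun_prop) continuousAt_const (by simpa using hr)
  filter_upwards [hsmall] with x hx
  let line : ℂ → V := fun l ↦ realPart x + l • (imaginaryPart x : V)
  have hline : ∀ l ∈ Metric.ball (0 : ℂ) 2, line l ∈ Metric.ball 0 r := by
    intro l hl
    rw [mem_ball_zero_iff] at hl ⊢
    calc ‖line l‖ ≤ ‖(realPart x : V)‖ + ‖l‖ * ‖(imaginaryPart x : V)‖ := by
          simpa only [norm_smul] using norm_add_le (realPart x : V) (l • (imaginaryPart x : V))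
      _ ≤ ‖(realPart x : V)‖ + 2 * ‖(imaginaryPart x : V)‖ := by gcongr
      _ < r := hx
  have hanalytic : AnalyticOnNhd ℂ (F ∘ line) (Metric.ball 0 2) := by
    refine DifferentiableOn.analyticOnNhd (fun l hl ↦ ?_) Metric.isOpen_ball
    exact ((hball _ (hline l hl)).1.comp l (by fun_prop)).differentiableWithinAt
  have hreal : ∀ᶠ t : ℝ in 𝓝[≠] 0, (F ∘ line) t = 0 := by
    have hball2 : ∀ᶠ t : ℝ in 𝓝 0, (t : ℂ) ∈ Metric.ball 0 2 :=
      continuous_ofReal.continuousAt.eventually (Metric.ball_mem_nhds _ (by simp))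
    filter_upwards [nhdsWithin_le_nhds hball2] with t ht
    refine (hball _ (hline t ht)).2 ((realPart x).2.add ?_)
    exact (show IsSelfAdjoint (t : ℂ) from conj_ofReal t).smul (imaginaryPart x).2
  have hofReal : Tendsto ofReal (𝓝[≠] 0) (𝓝[≠] 0) := by
    simpa using (hasDerivAt_id (0 : ℝ)).ofReal_comp.tendsto_nhdsNE (by simp)
  have hzero := hanalytic.eqOn_zero_of_preconnected_of_frequently_eq_zero
    (convex_ball 0 2).isPreconnected (Metric.mem_ball_self two_pos)
    (hofReal.frequently hreal.frequently) (show I ∈ Metric.ball 0 2 by simp)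
  simpa only [Function.comp_apply, Pi.zero_apply, line, realPart_add_I_smul_imaginaryPart]
    using hzero

theorem eventually_eq_zero_of_antidiagonal [StarAddMonoid V] [StarModule ℂ V] [ContinuousStar V]
    {F : V × V → W} (hF : ∀ᶠ x in 𝓝 0, DifferentiableAt ℂ F x)
    (hF0 : ∀ᶠ p in 𝓝 0, F (p, star p) = 0) : ∀ᶠ x in 𝓝 0, F x = 0 := by
  let rot : V × V → V × V := fun x ↦ (x.1 + I • x.2, x.1 - I • x.2)
  have hrot : Tendsto rot (𝓝 0) (𝓝 0) := by
    have h : Continuous rot := by fun_prop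
    simpa [rot, Prod.zero_eq_mk] using h.tendsto 0
  have hzero : ∀ᶠ x in 𝓝 0, (F ∘ rot) x = 0 := by
    refine eventually_eq_zero_of_isSelfAdjoint ?_ ?_
    · filter_upwards [hrot hF] with x hx
      exact hx.comp x (by fun_prop)
    · have hfst : Tendsto (fun x ↦ (rot x).1) (𝓝 0) (𝓝 0) := by simpa using hrot.fst_nhds
      filter_upwards [hfst hF0] with x hx hsa
      have h1 : star x.1 = x.1 := congrArg Prod.fst hsa
      have h2 : star x.2 = x.2 := congrArg Prod.snd hsa
      simpa [rot, h1, h2, sub_eq_add_neg] using hx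
  let rotInv : V × V → V × V := fun x ↦
    ((1 / 2 : ℂ) • (x.1 + x.2), (-I / 2) • (x.1 - x.2))
  have hrotInv : Tendsto rotInv (𝓝 0) (𝓝 0) := by
    have h : Continuous rotInv := by fun_prop
    simpa [rotInv, Prod.zero_eq_mk] using h.tendsto 0
  filter_upwards [hrotInv hzero] with x hx
  have hx' : rot (rotInv x) = x := by
    have hI : I * (-I / 2) = 1 / 2 := by linear_combination (-1 / 2) * I_mul_I
    simp only [rot, rotInv, smul_smul, hI]
    ext <;> dsimp only <;> module
  simpa [hx'] using hx

end IdentityPrinciples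

theorem coeff_eq_zero_of_sum_mul_pow_eventually_eq_zero {𝕜 : Type*} [NontriviallyNormedField 𝕜]
    {n : ℕ} {c : Fin n → 𝕜} (h : ∀ᶠ x in 𝓝 (0 : 𝕜), ∑ i, c i * x ^ (i : ℕ) = 0) : c = 0 := by
  have hpoly : ∑ i : Fin n, Polynomial.monomial i (c i) = 0 := by
    refine Polynomial.eq_zero_of_infinite_isRoot _ ((infinite_of_mem_nhds 0 h).mono fun x hx ↦ ?_)
    simpa [Polynomial.eval_finsetSum] using hx
  funext i
  simpa [Polynomial.finsetSum_coeff, Polynomial.coeff_monomial, Fin.val_inj] using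
    congrArg (Polynomial.coeff · (i : ℕ)) hpoly

/-! ### Polarized tangency -/

/-- The Schwarz reflection `k̄(q) = conj (k (conj q))`, holomorphic whenever `k` is. It is also used
for functions of one variable, where `star` is complex conjugation. -/
def schwarz {V : Type*} [Star V] (k : V → ℂ) (q : V) : ℂ := conj (k (star q))

theorem schwarz_star {V : Type*} [InvolutiveStar V] (k : V → ℂ) (p : V) :
    schwarz k (star p) = conj (k p) := by
  rw [schwarz, star_star]

/-- The polarization `z₁c + z₂c² + aζ + bζ²`, with `p = (z₁, z₂, ζ, w)` and `q = (a, b, c, w')`, of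
the real polynomial defining `Q`. -/
def polarForm (p q : E4) : ℂ :=
  p 0 * q 2 + p 1 * q 2 ^ 2 + q 0 * p 2 + q 1 * p 2 ^ 2

/-- The complexification of `Q`: here `q` takes the place of the conjugate of `p`. -/
def complexifiedQ : Set (E4 × E4) :=
  {x | x.1 3 - x.2 3 = 2 * I * polarForm x.1 x.2}

/-- The polarization of the equation saying that `(f, g, h, e)` is tangent to `Q` at `p`. -/
def polarDefect (f g h e : E4 → ℂ) (p q : E4) : ℂ :=
  e p - schwarz e q - 2 * I *
    (f p * q 2 + g p * q 2 ^ 2 + h p * (q 0 + 2 * q 1 * p 2)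
      + (schwarz f q * p 2 + schwarz g q * p 2 ^ 2 + schwarz h q * (p 0 + 2 * p 1 * q 2)))

theorem im_eq_two_mul_re_iff {a s : ℂ} : a.im = 2 * s.re ↔ a - conj a = 2 * I * (s + conj s) := by
  rw [Complex.sub_conj, Complex.add_conj, mul_right_comm 2 I, ← mul_comm I, ← mul_comm I,
    mul_right_inj' I_ne_zero]
  norm_cast
  constructor <;> intro h <;> linarith

theorem mem_Q_iff {p : E4} : p ∈ Q ↔ (p, star p) ∈ complexifiedQ := by
  rw [Q, Set.mem_ofPred_eq, ← mul_add, ← add_re, im_eq_two_mul_re_iff]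
  simp [complexifiedQ, polarForm, add_assoc]

theorem tangentOn_iff {f g h e : E4 → ℂ} {U : Set E4} :
    TangentOn f g h e U ↔ ∀ p ∈ Q ∩ U, polarDefect f g h e p (star p) = 0 := by
  refine forall₂_congr fun p _ ↦ ?_
  rw [im_eq_two_mul_re_iff, polarDefect, sub_eq_zero]
  simp [schwarz_star, map_ofNat]

/-- A projection of `ℂ⁴ × ℂ⁴` onto `complexifiedQ`, moving only the two coordinates `w` and `w'`. -/
noncomputable def complexifiedQProj (x : E4 × E4) : E4 × E4 :=
  (![x.1 0, x.1 1, x.1 2, (x.1 3 + x.2 3) / 2 + I * polarForm x.1 x.2],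
    ![x.2 0, x.2 1, x.2 2, (x.1 3 + x.2 3) / 2 - I * polarForm x.1 x.2])

theorem complexifiedQProj_mem (x : E4 × E4) : complexifiedQProj x ∈ complexifiedQ := by
  simp only [complexifiedQ, complexifiedQProj, polarForm, Set.mem_ofPred_eq, Matrix.cons_val]
  ring

theorem complexifiedQProj_of_mem {x : E4 × E4} (hx : x ∈ complexifiedQ) :
    complexifiedQProj x = x := by
  have hx' : x.1 3 - x.2 3 = 2 * I * polarForm x.1 x.2 := hx
  have hfst : (x.1 3 + x.2 3) / 2 + I * polarForm x.1 x.2 = x.1 3 := by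
    linear_combination -hx' / 2
  have hsnd : (x.1 3 + x.2 3) / 2 - I * polarForm x.1 x.2 = x.2 3 := by
    linear_combination hx' / 2
  ext i <;> fin_cases i <;> simp [complexifiedQProj, hfst, hsnd]

theorem complexifiedQProj_star (p : E4) :
    (complexifiedQProj (p, star p)).2 = star (complexifiedQProj (p, star p)).1 := by
  have hconj : (p 3 + conj (p 3)) / 2 - I * polarForm p (star p) =
      conj ((p 3 + conj (p 3)) / 2 + I * polarForm p (star p)) := by
    simp only [polarForm, Pi.star_apply, RCLike.star_def, map_add, map_mul, map_pow, map_div₀,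
      map_ofNat, conj_I, conj_conj]
    ring
  ext i
  fin_cases i
  exacts [rfl, rfl, rfl, hconj]

theorem differentiable_complexifiedQProj : Differentiable ℂ complexifiedQProj := by
  refine Differentiable.prodMk (differentiable_pi.2 fun i ↦ ?_) (differentiable_pi.2 fun i ↦ ?_) <;>
  fin_cases i <;>
  simp only [polarForm, Fin.zero_eta, Fin.mk_one, Fin.reduceFinMk, Matrix.cons_val] <;> fun_prop

theorem complexifiedQProj_zero : complexifiedQProj 0 = 0 :=
  complexifiedQProj_of_mem (by simp [complexifiedQ, polarForm])

section SchwarzDifferentiability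

variable {V : Type*} [NormedAddCommGroup V] [NormedSpace ℂ V] [StarAddMonoid V]
  [NormedStarGroup V] [StarModule ℂ V] {k : V → ℂ}

theorem differentiableAt_schwarz {q : V} (hk : DifferentiableAt ℂ k (star q)) :
    DifferentiableAt ℂ (schwarz k) q := by
  have h := hk.star_star
  rwa [star_star] at h

theorem eventually_differentiableAt_schwarz (hk : ∀ᶠ p in 𝓝 0, DifferentiableAt ℂ k p) :
    ∀ᶠ q in 𝓝 0, DifferentiableAt ℂ (schwarz k) q := by
  have hstar : Tendsto (star : V → V) (𝓝 0) (𝓝 0) := by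
    simpa only [star_zero] using continuous_star.tendsto (0 : V)
  filter_upwards [hstar hk] with q hq using differentiableAt_schwarz hq

end SchwarzDifferentiability

section Polarization

variable {f g h e : E4 → ℂ}

theorem differentiableAt_polarDefect {x : E4 × E4} (hf : DifferentiableAt ℂ f x.1)
    (hg : DifferentiableAt ℂ g x.1) (hh : DifferentiableAt ℂ h x.1)
    (he : DifferentiableAt ℂ e x.1) (hf' : DifferentiableAt ℂ (schwarz f) x.2)
    (hg' : DifferentiableAt ℂ (schwarz g) x.2) (hh' : DifferentiableAt ℂ (schwarz h) x.2)
    (he' : DifferentiableAt ℂ (schwarz e) x.2) :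
    DifferentiableAt ℂ (fun x : E4 × E4 ↦ polarDefect f g h e x.1 x.2) x := by
  unfold polarDefect
  fun_prop

theorem eventually_polarDefect_eq_zero (hf : ∀ᶠ p in 𝓝 0, DifferentiableAt ℂ f p)
    (hg : ∀ᶠ p in 𝓝 0, DifferentiableAt ℂ g p) (hh : ∀ᶠ p in 𝓝 0, DifferentiableAt ℂ h p)
    (he : ∀ᶠ p in 𝓝 0, DifferentiableAt ℂ e p)
    (htangent : ∀ᶠ p in 𝓝 0, p ∈ Q → polarDefect f g h e p (star p) = 0) :
    ∀ᶠ x in 𝓝 0, x ∈ complexifiedQ → polarDefect f g h e x.1 x.2 = 0 := by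
  have hproj : Tendsto complexifiedQProj (𝓝 0) (𝓝 0) := by
    simpa only [complexifiedQProj_zero] using differentiable_complexifiedQProj.continuous.tendsto 0
  let F : E4 × E4 → ℂ := fun x ↦ polarDefect f g h e x.1 x.2
  have hF : ∀ᶠ x in 𝓝 0, DifferentiableAt ℂ (F ∘ complexifiedQProj) x := by
    have hfst := hproj.fst_nhds
    have hsnd := hproj.snd_nhds
    filter_upwards [hfst hf, hfst hg, hfst hh, hfst he,
      hsnd (eventually_differentiableAt_schwarz hf), hsnd (eventually_differentiableAt_schwarz hg),
      hsnd (eventually_differentiableAt_schwarz hh), hsnd (eventually_differentiableAt_schwarz he)]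
      with x hf hg hh he hf' hg' hh' he'
    exact (differentiableAt_polarDefect hf hg hh he hf' hg' hh' he').comp x
      differentiable_complexifiedQProj.differentiableAt
  have hreal : ∀ᶠ p in 𝓝 0, (F ∘ complexifiedQProj) (p, star p) = 0 := by
    have hdiag : Tendsto (fun p : E4 ↦ (p, star p)) (𝓝 0) (𝓝 0) := by
      have hcont : Continuous fun p : E4 ↦ (p, star p) := by fun_prop
      simpa [Prod.zero_eq_mk] using hcont.tendsto 0
    filter_upwards [(hproj.comp hdiag).fst_nhds htangent] with p hp
    have hstar := complexifiedQProj_star p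
    simp only [Function.comp_apply, F, hstar]
    exact hp (mem_Q_iff.2 (hstar ▸ complexifiedQProj_mem (p, star p)))
  filter_upwards [eventually_eq_zero_of_antidiagonal hF hreal] with x hx hxQ
  rwa [Function.comp_apply, complexifiedQProj_of_mem hxQ] at hx

end Polarization

/-- `(f, g, h, e)` satisfies the polarized tangency equation on the polydisc of radius `r`, where
the reflected functions are holomorphic. The bound `r ≤ 1` makes powers of small numbers smaller. -/
structure PolarTangentOn (f g h e : E4 → ℂ) (r : ℝ) : Prop where
  pos : 0 < r
  le_one : r ≤ 1
  differentiableAt_f : ∀ q ∈ Metric.ball 0 r, DifferentiableAt ℂ (schwarz f) q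
  differentiableAt_g : ∀ q ∈ Metric.ball 0 r, DifferentiableAt ℂ (schwarz g) q
  differentiableAt_h : ∀ q ∈ Metric.ball 0 r, DifferentiableAt ℂ (schwarz h) q
  differentiableAt_e : ∀ q ∈ Metric.ball 0 r, DifferentiableAt ℂ (schwarz e) q
  polarDefect_eq_zero : ∀ p ∈ Metric.ball 0 r, ∀ q ∈ Metric.ball 0 r, (p, q) ∈ complexifiedQ →
    polarDefect f g h e p q = 0

/-! ### First order along the `w`-axis -/

theorem vec4_mem_ball_zero_iff {r : ℝ} {a b c d : ℂ} :
    ![a, b, c, d] ∈ Metric.ball (0 : E4) r ↔ ‖a‖ < r ∧ ‖b‖ < r ∧ ‖c‖ < r ∧ ‖d‖ < r := by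
  rw [mem_ball_zero_iff]
  refine ⟨fun h ↦ ?_, fun h ↦ (pi_norm_lt_iff ((norm_nonneg a).trans_lt h.1)).2 ?_⟩
  · simpa [Fin.forall_fin_succ] using fun i ↦ (norm_le_pi_norm ![a, b, c, d] i).trans_lt h
  · simpa [Fin.forall_fin_succ] using h

theorem norm_apply_lt_of_mem_ball_zero {r : ℝ} {p : E4} (hp : p ∈ Metric.ball 0 r) (i : Fin 4) :
    ‖p i‖ < r :=
  (norm_le_pi_norm p i).trans_lt (mem_ball_zero_iff.1 hp)

theorem vec4_zero : (![0, 0, 0, 0] : E4) = 0 := by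
  simp

/-- The `i`-th partial derivative of the reflection of `k` at the point `(0, 0, 0, w)`. -/
noncomputable def axisPartial (k : E4 → ℂ) (i : Fin 4) (w : ℂ) : ℂ :=
  fderiv ℂ (schwarz k) ![0, 0, 0, w] (Pi.single i 1)

theorem fderiv_schwarz_axis (k : E4 → ℂ) (w : ℂ) (v : E4) :
    fderiv ℂ (schwarz k) ![0, 0, 0, w] v = ∑ i, v i * axisPartial k i w := by
  conv_lhs => rw [← Finset.univ_sum_single v, map_sum]
  refine Finset.sum_congr rfl fun i _ ↦ ?_
  rw [axisPartial, ← smul_eq_mul, ← map_smul, ← Pi.single_smul, smul_eq_mul, mul_one]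

theorem schwarz_axis_eq_zero_of_axisPartial_eq_zero {k : E4 → ℂ} {r : ℝ}
    (hk : ∀ q ∈ Metric.ball 0 r, DifferentiableAt ℂ (schwarz k) q) (hk0 : k 0 = 0)
    (hpartial : ∀ w ∈ Metric.ball 0 r, axisPartial k 3 w = 0) {w : ℂ}
    (hw : w ∈ Metric.ball 0 r) : schwarz k ![0, 0, 0, w] = 0 := by
  have hr : 0 < r := (norm_nonneg w).trans_lt (mem_ball_zero_iff.1 hw)
  have hderiv (x : ℂ) (hx : x ∈ Metric.ball 0 r) :
      HasDerivAt (fun x ↦ schwarz k ![0, 0, 0, x]) 0 x := by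
    have hmem : (![0, 0, 0, x] : E4) ∈ Metric.ball 0 r :=
      vec4_mem_ball_zero_iff.2 (by simpa [hr] using hx)
    have haxis : HasDerivAt (fun x ↦ ![0, 0, 0, x]) (Pi.single 3 1 : E4) x := by
      refine hasDerivAt_pi.2 fun i ↦ ?_
      fin_cases i <;> simp [hasDerivAt_const, hasDerivAt_id']
    exact ((hk _ hmem).hasFDerivAt.comp_hasDerivAt x haxis).congr_deriv (hpartial x hx)
  have hconst := Metric.isOpen_ball.is_const_of_deriv_eq_zero (convex_ball 0 r).isPreconnected
    (fun x hx ↦ (hderiv x hx).differentiableAt.differentiableWithinAt)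
    (fun x hx ↦ (hderiv x hx).deriv) hw (Metric.mem_ball_self hr)
  simpa only [vec4_zero, schwarz, star_zero, hk0, map_zero] using hconst

namespace PolarTangentOn

variable {f g h e : E4 → ℂ} {r : ℝ}

theorem axis_mem_ball (H : PolarTangentOn f g h e r) {w : ℂ} (hw : ‖w‖ < r) :
    ![0, 0, 0, w] ∈ Metric.ball (0 : E4) r :=
  vec4_mem_ball_zero_iff.2 (by simpa [H.pos] using hw)

theorem e_eq (H : PolarTangentOn f g h e r) {p : E4} (hp : p ∈ Metric.ball 0 r) :
    e p = schwarz e ![0, 0, 0, p 3] + 2 * I * (schwarz f ![0, 0, 0, p 3] * p 2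
      + schwarz g ![0, 0, 0, p 3] * p 2 ^ 2 + schwarz h ![0, 0, 0, p 3] * p 0) := by
  have hdefect := H.polarDefect_eq_zero p hp _
    (H.axis_mem_ball (norm_apply_lt_of_mem_ball_zero hp 3)) (by simp [complexifiedQ, polarForm])
  simp only [polarDefect, Matrix.cons_val] at hdefect
  linear_combination hdefect

theorem fderiv_eq (H : PolarTangentOn f g h e r) {p : E4} (hp : p ∈ Metric.ball 0 r)
    (α β γ : ℂ) {v : E4} (hv : v = ![α, β, γ, -2 * I * (γ * p 0 + α * p 2 + β * p 2 ^ 2)]) :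
    -fderiv ℂ (schwarz e) ![0, 0, 0, p 3] v = 2 * I * (f p * γ + h p * (α + 2 * β * p 2)
      + fderiv ℂ (schwarz f) ![0, 0, 0, p 3] v * p 2
      + fderiv ℂ (schwarz g) ![0, 0, 0, p 3] v * p 2 ^ 2
      + fderiv ℂ (schwarz h) ![0, 0, 0, p 3] v * p 0
      + schwarz h ![0, 0, 0, p 3] * (2 * p 1 * γ)) := by
  let q : ℂ → E4 := fun t ↦
    ![0, 0, 0, p 3] + t • v + t ^ 2 • ![0, 0, 0, -2 * I * (p 1 * γ ^ 2)]
  have hq : HasDerivAt q v 0 := by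
    exact ((((hasDerivAt_id (0 : ℂ)).smul_const v).const_add _).add
      (((hasDerivAt_id (0 : ℂ)).pow 2).smul_const _)).congr_deriv (by simp)
  have hq0 : q 0 = ![0, 0, 0, p 3] := by simp [q]
  have hmem : q 0 ∈ Metric.ball 0 r :=
    hq0 ▸ H.axis_mem_ball (norm_apply_lt_of_mem_ball_zero hp 3)
  have hcomp {k : E4 → ℂ} (hk : ∀ q ∈ Metric.ball 0 r, DifferentiableAt ℂ (schwarz k) q) :
      HasDerivAt (fun t ↦ schwarz k (q t)) (fderiv ℂ (schwarz k) ![0, 0, 0, p 3] v) 0 :=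
    hq0 ▸ (hk _ hmem).hasFDerivAt.comp_hasDerivAt 0 hq
  have hcoord (i : Fin 4) : HasDerivAt (fun t ↦ q t i) (v i) 0 := hasDerivAt_pi.1 hq i
  have hzero : (fun t ↦ polarDefect f g h e p (q t)) =ᶠ[𝓝 0] 0 := by
    filter_upwards [hq.continuousAt.eventually (Metric.isOpen_ball.mem_nhds hmem)] with t ht
    refine H.polarDefect_eq_zero p hp _ ht ?_
    simp only [complexifiedQ, polarForm, q, hv, Set.mem_ofPred_eq, Pi.add_apply, Pi.smul_apply,
      smul_eq_mul, Matrix.cons_val]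
    ring
  have hderiv := ((hcomp H.differentiableAt_e).const_sub (e p)).sub
    ((((((hcoord 2).const_mul (f p)).add (((hcoord 2).pow 2).const_mul (g p))).add
      (((hcoord 0).add (((hcoord 1).const_mul 2).mul_const (p 2))).const_mul (h p))).add
    ((((hcomp H.differentiableAt_f).mul_const (p 2)).add
      ((hcomp H.differentiableAt_g).mul_const (p 2 ^ 2))).add
      ((hcomp H.differentiableAt_h).mul (((hcoord 2).const_mul (2 * p 1)).const_add (p 0))))
      ).const_mul (2 * I))
  have hunique := hderiv.unique ((hasDerivAt_const (0 : ℂ) (0 : ℂ)).congr_of_eventuallyEq hzero)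
  simp only [hq0, hv, Matrix.cons_val] at hunique ⊢
  linear_combination hunique

theorem axisPartial_identity_zero (H : PolarTangentOn f g h e r) {p : E4}
    (hp : p ∈ Metric.ball 0 r) :
    -(axisPartial e 0 (p 3) - 2 * I * p 2 * axisPartial e 3 (p 3)) = 2 * I * (h p
      + (axisPartial f 0 (p 3) - 2 * I * p 2 * axisPartial f 3 (p 3)) * p 2
      + (axisPartial g 0 (p 3) - 2 * I * p 2 * axisPartial g 3 (p 3)) * p 2 ^ 2
      + (axisPartial h 0 (p 3) - 2 * I * p 2 * axisPartial h 3 (p 3)) * p 0) := by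
  have hfderiv := H.fderiv_eq hp 1 0 0 rfl
  simp only [fderiv_schwarz_axis, Fin.sum_univ_four, Matrix.cons_val] at hfderiv
  linear_combination hfderiv

theorem axisPartial_identity_one (H : PolarTangentOn f g h e r) {p : E4}
    (hp : p ∈ Metric.ball 0 r) :
    -(axisPartial e 1 (p 3) - 2 * I * p 2 ^ 2 * axisPartial e 3 (p 3)) = 2 * I * (2 * h p * p 2
      + (axisPartial f 1 (p 3) - 2 * I * p 2 ^ 2 * axisPartial f 3 (p 3)) * p 2
      + (axisPartial g 1 (p 3) - 2 * I * p 2 ^ 2 * axisPartial g 3 (p 3)) * p 2 ^ 2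
      + (axisPartial h 1 (p 3) - 2 * I * p 2 ^ 2 * axisPartial h 3 (p 3)) * p 0) := by
  have hfderiv := H.fderiv_eq hp 0 1 0 rfl
  simp only [fderiv_schwarz_axis, Fin.sum_univ_four, Matrix.cons_val] at hfderiv
  linear_combination hfderiv

theorem axisPartial_identity_two (H : PolarTangentOn f g h e r) {p : E4}
    (hp : p ∈ Metric.ball 0 r) :
    -(axisPartial e 2 (p 3) - 2 * I * p 0 * axisPartial e 3 (p 3)) = 2 * I * (f p
      + (axisPartial f 2 (p 3) - 2 * I * p 0 * axisPartial f 3 (p 3)) * p 2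
      + (axisPartial g 2 (p 3) - 2 * I * p 0 * axisPartial g 3 (p 3)) * p 2 ^ 2
      + (axisPartial h 2 (p 3) - 2 * I * p 0 * axisPartial h 3 (p 3)) * p 0
      + schwarz h ![0, 0, 0, p 3] * (2 * p 1)) := by
  have hfderiv := H.fderiv_eq hp 0 0 1 rfl
  simp only [fderiv_schwarz_axis, Fin.sum_univ_four, Matrix.cons_val] at hfderiv
  linear_combination hfderiv

theorem axisPartial_polynomial (H : PolarTangentOn f g h e r) {p : E4}
    (hp : p ∈ Metric.ball 0 r) :
    -axisPartial e 1 (p 3) + 2 * axisPartial e 0 (p 3) * p 2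
      - 2 * I * axisPartial e 3 (p 3) * p 2 ^ 2 = 2 * I * (axisPartial f 1 (p 3) * p 2
      + (axisPartial g 1 (p 3) - 2 * axisPartial f 0 (p 3)) * p 2 ^ 2
      + (2 * I * axisPartial f 3 (p 3) - 2 * axisPartial g 0 (p 3)) * p 2 ^ 3
      + 2 * I * axisPartial g 3 (p 3) * p 2 ^ 4 + p 0 * (axisPartial h 1 (p 3)
        - 2 * axisPartial h 0 (p 3) * p 2 + 2 * I * axisPartial h 3 (p 3) * p 2 ^ 2)) := by
  linear_combination H.axisPartial_identity_one hp - 2 * p 2 * H.axisPartial_identity_zero hp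

theorem eventually_vec4_mem_ball (H : PolarTangentOn f g h e r) {z₁ w : ℂ} (hz₁ : ‖z₁‖ < r)
    (hw : ‖w‖ < r) : ∀ᶠ ζ in 𝓝 0, ![z₁, 0, ζ, w] ∈ Metric.ball (0 : E4) r := by
  filter_upwards [Metric.ball_mem_nhds 0 H.pos] with ζ hζ
  exact vec4_mem_ball_zero_iff.2 ⟨hz₁, by simpa using H.pos, by simpa using hζ, hw⟩

theorem axisPartial_g_eq_zero (H : PolarTangentOn f g h e r) {w : ℂ} (hw : w ∈ Metric.ball 0 r) :
    axisPartial g 3 w = 0 := by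
  have hcoeff := coeff_eq_zero_of_sum_mul_pow_eventually_eq_zero
    (c := ![-axisPartial e 1 w, 2 * axisPartial e 0 w - 2 * I * axisPartial f 1 w,
      - 2 * I * axisPartial e 3 w - 2 * I * (axisPartial g 1 w - 2 * axisPartial f 0 w),
      -2 * I * (2 * I * axisPartial f 3 w - 2 * axisPartial g 0 w), 4 * axisPartial g 3 w]) <| by
    filter_upwards [H.eventually_vec4_mem_ball (z₁ := 0) (by simpa using H.pos)
      (mem_ball_zero_iff.1 hw)] with ζ hζ
    have hpoly := H.axisPartial_polynomial hζ
    simp only [Fin.sum_univ_five, Matrix.cons_val, Fin.isValue, Fin.coe_ofNat_eq_mod] at hpoly ⊢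
    linear_combination hpoly + 4 * axisPartial g 3 w * ζ ^ 4 * I_sq
  simpa using congrFun hcoeff 4

theorem axisPartial_h_eq_zero (H : PolarTangentOn f g h e r) {w : ℂ} (hw : w ∈ Metric.ball 0 r) :
    axisPartial h 0 w = 0 ∧ axisPartial h 3 w = 0 := by
  have hr : ‖(r / 2 : ℂ)‖ < r := by simpa [abs_of_pos H.pos] using H.pos
  have hcoeff := coeff_eq_zero_of_sum_mul_pow_eventually_eq_zero
    (c := ![axisPartial h 1 w, -2 * axisPartial h 0 w, 2 * I * axisPartial h 3 w]) <| by
    filter_upwards [H.eventually_vec4_mem_ball (z₁ := 0) (by simpa using H.pos)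
      (mem_ball_zero_iff.1 hw), H.eventually_vec4_mem_ball hr (mem_ball_zero_iff.1 hw)] with ζ h₀ h₁
    have hpoly₀ := H.axisPartial_polynomial h₀
    have hpoly₁ := H.axisPartial_polynomial h₁
    have hne : I * r ≠ 0 := mul_ne_zero I_ne_zero (ofReal_ne_zero.2 H.pos.ne')
    simp only [Fin.sum_univ_three, Matrix.cons_val, Fin.isValue, Fin.coe_ofNat_eq_mod]
      at hpoly₀ hpoly₁ ⊢
    refine mul_left_cancel₀ hne ?_
    linear_combination hpoly₀ - hpoly₁
  exact ⟨by simpa using congrFun hcoeff 1, by simpa using congrFun hcoeff 2⟩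

end PolarTangentOn

theorem schwarz_vec4 (k : E4 → ℂ) (a b c d : ℂ) :
    schwarz k ![a, b, c, d] = conj (k ![conj a, conj b, conj c, conj d]) := by
  rw [schwarz]
  congr 2
  ext i
  fin_cases i <;> rfl

/-- The coefficients, depending on `w` only, of the shape forced on `(f, h, e)` by the tangency
equation at first order along the `w`-axis. -/
structure NormalCoeffs where
  (F M K L N H J E : ℂ → ℂ)

namespace NormalCoeffs

/-- The function `F + M z₁ + K ζ + L z₁ ζ - N ζ²`. -/
def f (C : NormalCoeffs) (p : E4) : ℂ :=
  C.F (p 3) + C.M (p 3) * p 0 + C.K (p 3) * p 2 + C.L (p 3) * p 0 * p 2 - C.N (p 3) * p 2 ^ 2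

/-- The function `H ζ + J ζ²`. -/
def h (C : NormalCoeffs) (p : E4) : ℂ :=
  C.H (p 3) * p 2 + C.J (p 3) * p 2 ^ 2

/-- The function `E + 2 i F̄ ζ`. -/
def e (C : NormalCoeffs) (p : E4) : ℂ :=
  C.E (p 3) + 2 * I * schwarz C.F (p 3) * p 2

end NormalCoeffs

/-- The tuple `(f, g, h, e)`, tangent to `Q` and zero at the origin, has the coefficients `C`. -/
structure FirstOrderForm (C : NormalCoeffs) (f g h e : E4 → ℂ) (r : ℝ) : Prop
    extends PolarTangentOn f g h e r where
  f_eq : ∀ p ∈ Metric.ball 0 r, f p = C.f p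
  h_eq : ∀ p ∈ Metric.ball 0 r, h p = C.h p
  e_eq : ∀ p ∈ Metric.ball 0 r, e p = C.e p
  F_zero : C.F 0 = 0
  E_zero : C.E 0 = 0
  schwarz_E : ∀ w : ℂ, ‖w‖ < r → schwarz C.E w = C.E w

namespace PolarTangentOn

variable {f g h e : E4 → ℂ} {r : ℝ}

theorem schwarz_g_axis (H : PolarTangentOn f g h e r) (hg₀ : g 0 = 0) {w : ℂ} (hw : ‖w‖ < r) :
    schwarz g ![0, 0, 0, w] = 0 :=
  schwarz_axis_eq_zero_of_axisPartial_eq_zero H.differentiableAt_g hg₀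
    (fun _ ↦ H.axisPartial_g_eq_zero) (mem_ball_zero_iff.2 hw)

theorem schwarz_h_axis (H : PolarTangentOn f g h e r) (hh₀ : h 0 = 0) {w : ℂ} (hw : ‖w‖ < r) :
    schwarz h ![0, 0, 0, w] = 0 :=
  schwarz_axis_eq_zero_of_axisPartial_eq_zero H.differentiableAt_h hh₀
    (fun _ hx ↦ (H.axisPartial_h_eq_zero hx).2) (mem_ball_zero_iff.2 hw)

theorem h_axis (H : PolarTangentOn f g h e r) (hh₀ : h 0 = 0) {w : ℂ} (hw : ‖w‖ < r) :
    h ![0, 0, 0, w] = 0 := by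
  simpa [schwarz_vec4] using H.schwarz_h_axis hh₀ (w := conj w) (by simpa using hw)

theorem f_eq (H : PolarTangentOn f g h e r) (hh₀ : h 0 = 0) {p : E4}
    (hp : p ∈ Metric.ball 0 r) :
    f p = f ![0, 0, 0, p 3] + (axisPartial e 3 (p 3) - axisPartial h 2 (p 3)) * p 0
      - axisPartial f 2 (p 3) * p 2 + 2 * I * axisPartial f 3 (p 3) * p 0 * p 2
      - axisPartial g 2 (p 3) * p 2 ^ 2 := by
  have hw := norm_apply_lt_of_mem_ball_zero hp 3
  have hw' := mem_ball_zero_iff.2 hw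
  have hpoint := H.axisPartial_identity_two hp
  have haxis := H.axisPartial_identity_two (H.axis_mem_ball hw)
  simp only [H.schwarz_h_axis hh₀ hw, H.axisPartial_g_eq_zero hw', H.axisPartial_h_eq_zero hw',
    Matrix.cons_val] at hpoint haxis
  refine mul_left_cancel₀ (mul_ne_zero two_ne_zero I_ne_zero) ?_
  linear_combination haxis - hpoint

theorem h_eq (H : PolarTangentOn f g h e r) (hh₀ : h 0 = 0) {p : E4}
    (hp : p ∈ Metric.ball 0 r) :
    h p = (axisPartial e 3 (p 3) - axisPartial f 0 (p 3)) * p 2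
      + (2 * I * axisPartial f 3 (p 3) - axisPartial g 0 (p 3)) * p 2 ^ 2 := by
  have hw := norm_apply_lt_of_mem_ball_zero hp 3
  have hw' := mem_ball_zero_iff.2 hw
  have hpoint := H.axisPartial_identity_zero hp
  have haxis := H.axisPartial_identity_zero (H.axis_mem_ball hw)
  simp only [H.h_axis hh₀ hw, H.axisPartial_g_eq_zero hw', H.axisPartial_h_eq_zero hw',
    Matrix.cons_val] at hpoint haxis
  refine mul_left_cancel₀ (mul_ne_zero two_ne_zero I_ne_zero) ?_
  linear_combination haxis - hpoint

theorem exists_firstOrderForm (H : PolarTangentOn f g h e r) (hf₀ : f 0 = 0) (hg₀ : g 0 = 0)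
    (hh₀ : h 0 = 0) (he₀ : e 0 = 0) : ∃ C, FirstOrderForm C f g h e r := by
  let C : NormalCoeffs :=
    { F := fun w ↦ f ![0, 0, 0, w]
      M := fun w ↦ axisPartial e 3 w - axisPartial h 2 w
      K := fun w ↦ -axisPartial f 2 w
      L := fun w ↦ 2 * I * axisPartial f 3 w
      N := axisPartial g 2
      H := fun w ↦ axisPartial e 3 w - axisPartial f 0 w
      J := fun w ↦ 2 * I * axisPartial f 3 w - axisPartial g 0 w
      E := fun w ↦ e ![0, 0, 0, w] }
  have haxis {w : ℂ} (hw : ‖w‖ < r) : e ![0, 0, 0, w] = schwarz e ![0, 0, 0, w] := by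
    simpa using H.e_eq (H.axis_mem_ball hw)
  have hschwarz (k : E4 → ℂ) (w : ℂ) :
      schwarz (fun w ↦ k ![0, 0, 0, w]) w = schwarz k ![0, 0, 0, w] := by
    rw [schwarz_vec4, map_zero]
    rfl
  refine ⟨C, { H with
    f_eq := fun p hp ↦ ?_
    h_eq := fun p hp ↦ ?_
    e_eq := fun p hp ↦ ?_
    F_zero := by simpa only [C, vec4_zero] using hf₀
    E_zero := by simpa only [C, vec4_zero] using he₀
    schwarz_E := fun w hw ↦ (hschwarz e w).trans (haxis hw).symm }⟩
  · simp only [C, NormalCoeffs.f, H.f_eq hh₀ hp]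
    ring
  · simp only [C, NormalCoeffs.h, H.h_eq hh₀ hp]
  · have hw := norm_apply_lt_of_mem_ball_zero hp 3
    simp only [C, NormalCoeffs.e, hschwarz, H.e_eq hp, haxis hw, H.schwarz_g_axis hg₀ hw,
      H.schwarz_h_axis hh₀ hw]
    ring

end PolarTangentOn

/-! ### Determination of the coefficients -/

theorem eq_quadratic_of_forall_add_eq_zero {κ : ℂ} {φ χ : ℂ → ℂ} {r : ℝ}
    (h : ∀ ζ c : ℂ, ‖ζ‖ < r → ‖c‖ < r → κ * ζ * c + φ ζ * c ^ 2 + χ c * ζ ^ 2 = 0) (hr : 0 < r) :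
    κ = 0 ∧ ∃ q, ∀ ζ : ℂ, ‖ζ‖ < r → φ ζ = q * ζ ^ 2 := by
  let ρ : ℂ := r / 2
  have hρ0 : ρ ≠ 0 := by simp [ρ, hr.ne']
  have hρ : ‖ρ‖ < r := by simpa [ρ, abs_of_pos hr] using hr
  have hρ' : ‖-ρ‖ < r := by rwa [norm_neg]
  constructor
  · refine (mul_eq_zero.1 ?_).resolve_right (pow_ne_zero 2 hρ0)
    linear_combination (h ρ ρ hρ hρ - h (-ρ) ρ hρ' hρ - h ρ (-ρ) hρ hρ' + h (-ρ) (-ρ) hρ' hρ') / 4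
  · refine ⟨-(χ ρ + χ (-ρ)) / (2 * ρ ^ 2), fun ζ hζ ↦ ?_⟩
    field_simp
    linear_combination h ζ ρ hζ hρ + h ζ (-ρ) hζ hρ'

theorem exists_I_mul_mul_sq_eq {r : ℝ} (hr : 0 < r) {d : ℂ} (hd : ‖d‖ < r ^ 3 / 4) :
    ∃ c : ℂ, ‖2 * c‖ < r ∧ I * r * c ^ 2 = d := by
  have hne : I * r ≠ 0 := mul_ne_zero I_ne_zero (ofReal_ne_zero.2 hr.ne')
  obtain ⟨c, hc⟩ := IsAlgClosed.exists_pow_nat_eq (d / (I * r)) two_pos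
  refine ⟨c, ?_, by rw [hc, mul_div_cancel₀ _ hne]⟩
  have hnorm : ‖c‖ ^ 2 = ‖d‖ / r := by
    rw [← norm_pow, hc]
    simp [abs_of_pos hr]
  have hsq : ‖2 * c‖ ^ 2 < r ^ 2 := by
    rw [norm_mul, mul_pow, hnorm, Complex.norm_ofNat, ← mul_div_assoc, div_lt_iff₀ hr]
    linarith
  exact lt_of_pow_lt_pow_left₀ 2 hr.le hsq

namespace FirstOrderForm

variable {C : NormalCoeffs} {f g h e : E4 → ℂ} {r : ℝ}

theorem identity (X : FirstOrderForm C f g h e r) {z₁ z₂ ζ w c w' : ℂ} (hz₁ : ‖z₁‖ < r)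
    (hz₂ : ‖z₂‖ < r) (hζ : ‖ζ‖ < r) (hw : ‖w‖ < r) (hc : ‖c‖ < r) (hw' : ‖w'‖ < r)
    (hmem : w - w' = 2 * I * (z₁ * c + z₂ * c ^ 2)) :
    C.E w - C.E w' + 2 * I * (schwarz C.F w * ζ + C.F w' * c) = 2 * I *
      ((C.F w + C.M w * z₁ + C.K w * ζ + C.L w * z₁ * ζ - C.N w * ζ ^ 2) * c
        + g ![z₁, z₂, ζ, w] * c ^ 2
        + (schwarz C.F w' + schwarz C.K w' * c - schwarz C.N w' * c ^ 2) * ζ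
        + schwarz g ![0, 0, c, w'] * ζ ^ 2
        + (schwarz C.H w' * c + schwarz C.J w' * c ^ 2) * (z₁ + 2 * z₂ * c)) := by
  have hp : ![z₁, z₂, ζ, w] ∈ Metric.ball (0 : E4) r :=
    vec4_mem_ball_zero_iff.2 ⟨hz₁, hz₂, hζ, hw⟩
  have hq : ![0, 0, c, w'] ∈ Metric.ball (0 : E4) r :=
    vec4_mem_ball_zero_iff.2 ⟨by simpa using X.pos, by simpa using X.pos, hc, hw'⟩
  have hq' : ![0, 0, conj c, conj w'] ∈ Metric.ball (0 : E4) r :=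
    vec4_mem_ball_zero_iff.2 ⟨by simpa using X.pos, by simpa using X.pos, by simpa using hc,
      by simpa using hw'⟩
  have hf : schwarz f ![0, 0, c, w'] =
      schwarz C.F w' + schwarz C.K w' * c - schwarz C.N w' * c ^ 2 := by
    rw [schwarz_vec4, map_zero, X.f_eq _ hq']
    simp [NormalCoeffs.f, schwarz]
  have hh : schwarz h ![0, 0, c, w'] = schwarz C.H w' * c + schwarz C.J w' * c ^ 2 := by
    rw [schwarz_vec4, map_zero, X.h_eq _ hq']
    simp [NormalCoeffs.h, schwarz]
  have he : schwarz e ![0, 0, c, w'] = C.E w' - 2 * I * C.F w' * c := by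
    rw [schwarz_vec4, map_zero, X.e_eq _ hq', ← X.schwarz_E w' hw']
    simp [NormalCoeffs.e, schwarz, map_ofNat, sub_eq_add_neg]
  have hdefect := X.polarDefect_eq_zero _ hp _ hq (by simpa [complexifiedQ, polarForm] using hmem)
  rw [polarDefect, X.f_eq _ hp, X.h_eq _ hp, X.e_eq _ hp, hf, hh, he] at hdefect
  simp only [NormalCoeffs.f, NormalCoeffs.h, NormalCoeffs.e, Matrix.cons_val] at hdefect
  linear_combination hdefect

end FirstOrderForm

/-- First order form in which, moreover, `g = N̄ ζ + q ζ²` on the `(ζ, w)`-plane. -/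
structure PlaneNormalForm (C : NormalCoeffs) (q : ℂ → ℂ) (f g h e : E4 → ℂ) (r : ℝ) : Prop
    extends FirstOrderForm C f g h e r where
  schwarz_K : ∀ w : ℂ, ‖w‖ < r → schwarz C.K w = -C.K w
  schwarz_q : ∀ w : ℂ, ‖w‖ < r → schwarz q w = -q w
  g_plane : ∀ ζ w : ℂ, ‖ζ‖ < r → ‖w‖ < r → g ![0, 0, ζ, w] = schwarz C.N w * ζ + q w * ζ ^ 2

theorem FirstOrderForm.exists_planeNormalForm {C : NormalCoeffs} {f g h e : E4 → ℂ} {r : ℝ}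
    (X : FirstOrderForm C f g h e r) : ∃ q, PlaneNormalForm C q f g h e r := by
  have hr : ‖(0 : ℂ)‖ < r := by simpa using X.pos
  have hplane (w : ℂ) (hw : ‖w‖ < r) (ζ c : ℂ) (hζ : ‖ζ‖ < r) (hc : ‖c‖ < r) :
      (C.K w + schwarz C.K w) * ζ * c + (g ![0, 0, ζ, w] - schwarz C.N w * ζ) * c ^ 2
        + (schwarz g ![0, 0, c, w] - C.N w * c) * ζ ^ 2 = 0 := by
    refine mul_left_cancel₀ (mul_ne_zero two_ne_zero I_ne_zero) ?_
    linear_combination -X.identity hr hr hζ hw hc hw (by ring)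
  choose! hK q hq using fun w hw ↦ eq_quadratic_of_forall_add_eq_zero (hplane w hw) X.pos
  have hg {ζ w : ℂ} (hζ : ‖ζ‖ < r) (hw : ‖w‖ < r) :
      g ![0, 0, ζ, w] = schwarz C.N w * ζ + q w * ζ ^ 2 := by
    linear_combination hq w hw ζ hζ
  refine ⟨q, { X with
    schwarz_K := fun w hw ↦ by linear_combination hK w hw
    schwarz_q := fun w hw ↦ ?_
    g_plane := fun ζ w ↦ hg }⟩
  let ρ : ℂ := r / 2
  have hρ0 : ρ ≠ 0 := by simp [ρ, X.pos.ne']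
  have hρ : ‖ρ‖ < r := by simpa [ρ, abs_of_pos X.pos] using X.pos
  have hschwarz : schwarz g ![0, 0, ρ, w] = C.N w * ρ + schwarz q w * ρ ^ 2 := by
    rw [schwarz_vec4, map_zero, hg (by simpa using hρ) (by simpa using hw)]
    simp [schwarz]
  refine mul_left_cancel₀ (pow_ne_zero 4 hρ0) ?_
  linear_combination hplane w hw ρ ρ hρ hρ - ρ ^ 2 * hK w hw - ρ ^ 2 * hschwarz
    - ρ ^ 2 * hg hρ hw

namespace PlaneNormalForm

variable {C : NormalCoeffs} {q : ℂ → ℂ} {f g h e : E4 → ℂ} {r : ℝ}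

theorem identity (X : PlaneNormalForm C q f g h e r) {z₁ z₂ ζ w c w' : ℂ} (hz₁ : ‖z₁‖ < r)
    (hz₂ : ‖z₂‖ < r) (hζ : ‖ζ‖ < r) (hw : ‖w‖ < r) (hc : ‖c‖ < r) (hw' : ‖w'‖ < r)
    (hmem : w - w' = 2 * I * (z₁ * c + z₂ * c ^ 2)) :
    C.E w - C.E w' + 2 * I * (schwarz C.F w - schwarz C.F w') * ζ = 2 * I *
      ((C.F w - C.F w' + (C.K w - C.K w') * ζ - (C.N w - C.N w') * ζ ^ 2
          + (C.M w + C.L w * ζ) * z₁) * c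
        + (g ![z₁, z₂, ζ, w] - schwarz C.N w' * ζ - q w' * ζ ^ 2) * c ^ 2
        + (schwarz C.H w' * c + schwarz C.J w' * c ^ 2) * (z₁ + 2 * z₂ * c)) := by
  have hg : schwarz g ![0, 0, c, w'] = C.N w' * c + schwarz q w' * c ^ 2 := by
    rw [schwarz_vec4, map_zero, X.g_plane _ _ (by simpa using hc) (by simpa using hw')]
    simp [schwarz]
  linear_combination X.toFirstOrderForm.identity hz₁ hz₂ hζ hw hc hw' hmem
    + 2 * I * ζ * c * X.schwarz_K w' hw' + 2 * I * ζ ^ 2 * hg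
    + 2 * I * ζ ^ 2 * c ^ 2 * X.schwarz_q w' hw'

theorem norm_lt_of_lt_cube (X : PlaneNormalForm C q f g h e r) {w : ℂ} (hw : ‖w‖ < r ^ 3 / 8) :
    ‖w‖ < r := by
  have := X.pos
  have := pow_le_of_le_one X.pos.le X.le_one three_ne_zero
  linarith

theorem exists_I_mul_mul_sq_eq_sub (X : PlaneNormalForm C q f g h e r) {w w' : ℂ}
    (hw : ‖w‖ < r ^ 3 / 8) (hw' : ‖w'‖ < r ^ 3 / 8) :
    ∃ c : ℂ, ‖c‖ < r ∧ ‖2 * c‖ < r ∧ I * r * c ^ 2 = w - w' := by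
  obtain ⟨c, hc, hcw⟩ :=
    exists_I_mul_mul_sq_eq X.pos ((norm_sub_le w w').trans_lt (by linarith) : ‖w - w'‖ < r ^ 3 / 4)
  refine ⟨c, ?_, hc, hcw⟩
  rw [norm_mul, Complex.norm_ofNat] at hc
  linarith [norm_nonneg c]

theorem identity_half (X : PlaneNormalForm C q f g h e r) {w w' ζ c : ℂ} (hw : ‖w‖ < r)
    (hw' : ‖w'‖ < r) (hζ : ‖ζ‖ < r) (hc : ‖c‖ < r) (hcw : I * r * c ^ 2 = w - w') :
    C.E w - C.E w' + 2 * I * (schwarz C.F w - schwarz C.F w') * ζ = 2 * I *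
      ((C.F w - C.F w' + (C.K w - C.K w') * ζ - (C.N w - C.N w') * ζ ^ 2
          + r * schwarz C.J w' * c ^ 2) * c
        + (g ![0, (r / 2 : ℂ), ζ, w] - schwarz C.N w' * ζ - q w' * ζ ^ 2
          + r * schwarz C.H w') * c ^ 2) := by
  have hpos := X.pos
  have hhalf : ‖(r / 2 : ℂ)‖ < r := by simpa [abs_of_pos hpos] using hpos
  linear_combination X.identity (z₁ := 0) (by simpa using hpos) hhalf hζ hw hc hw'
    (by linear_combination -hcw)

theorem F_sub_eq (X : PlaneNormalForm C q f g h e r) {w w' ζ : ℂ} (hw : ‖w‖ < r ^ 3 / 8)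
    (hw' : ‖w'‖ < r ^ 3 / 8) (hζ : ‖ζ‖ < r) :
    C.F w - C.F w' + (C.K w - C.K w') * ζ - (C.N w - C.N w') * ζ ^ 2
      = I * (w - w') * schwarz C.J w' := by
  obtain ⟨c, hc, -, hcw⟩ := X.exists_I_mul_mul_sq_eq_sub hw hw'
  obtain rfl | hc₀ := eq_or_ne c 0
  · obtain rfl : w = w' := by simpa [sub_eq_zero, eq_comm] using hcw
    ring
  have hpoint {c : ℂ} := X.identity_half (X.norm_lt_of_lt_cube hw) (X.norm_lt_of_lt_cube hw') hζ
    (c := c)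
  refine mul_left_cancel₀ (by simpa using hc₀ : 4 * I * c ≠ 0) ?_
  linear_combination hpoint (c := -c) (by rwa [norm_neg]) (by rwa [neg_sq]) - hpoint hc hcw
    + 4 * I * c * I * schwarz C.J w' * hcw - 4 * I * schwarz C.J w' * r * c ^ 3 * I_sq

theorem mul_E_sub_eq (X : PlaneNormalForm C q f g h e r) {w w' ζ : ℂ} (hw : ‖w‖ < r ^ 3 / 8)
    (hw' : ‖w'‖ < r ^ 3 / 8) (hζ : ‖ζ‖ < r) :
    r * (C.E w - C.E w' + 2 * I * (schwarz C.F w - schwarz C.F w') * ζ) = 2 * (w - w') *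
      (g ![0, (r / 2 : ℂ), ζ, w] - schwarz C.N w' * ζ - q w' * ζ ^ 2 + r * schwarz C.H w') := by
  obtain ⟨c, hc, -, hcw⟩ := X.exists_I_mul_mul_sq_eq_sub hw hw'
  have hpoint {c : ℂ} := X.identity_half (X.norm_lt_of_lt_cube hw) (X.norm_lt_of_lt_cube hw') hζ
    (c := c)
  linear_combination
    r / 2 * (hpoint hc hcw + hpoint (c := -c) (by rwa [norm_neg]) (by rwa [neg_sq]))
    + 2 * (g ![0, (r / 2 : ℂ), ζ, w] - schwarz C.N w' * ζ - q w' * ζ ^ 2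
      + r * schwarz C.H w') * hcw

theorem E_sub_add_eq (X : PlaneNormalForm C q f g h e r) {w w' ζ : ℂ} (hw : ‖w‖ < r ^ 3 / 8)
    (hw' : ‖w'‖ < r ^ 3 / 8) (hζ : ‖ζ‖ < r) :
    C.E w - C.E w' + 2 * I * (schwarz C.F w - schwarz C.F w') * ζ
      = (w - w') * (C.M w + schwarz C.H w' + C.L w * ζ) := by
  have hpos := X.pos
  -- With `z₁ = -3rc/4` and `z₂ = r/4`, both `c` and `2c` solve `w - w' = 2i(z₁c + z₂c²)`; four
  -- times the first identity minus the second one does not involve `g`.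
  obtain ⟨c, hc, hc₂, hcw⟩ := X.exists_I_mul_mul_sq_eq_sub hw' hw
  have hz₁ : ‖-3 * (r / 4 : ℂ) * c‖ < r := by
    simp only [norm_mul, norm_neg, norm_div, norm_real, Complex.norm_ofNat,
      Real.norm_of_nonneg hpos.le]
    nlinarith [X.le_one]
  have hz₂ : ‖(r / 4 : ℂ)‖ < r := by
    simpa [abs_of_pos hpos] using (by linarith : r / 4 < r)
  have hpoint {d : ℂ} (hd : ‖d‖ < r) :=
    X.identity hz₁ hz₂ hζ (X.norm_lt_of_lt_cube hw) hd (X.norm_lt_of_lt_cube hw')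
  have hone := hpoint hc (by linear_combination hcw)
  have htwo := hpoint hc₂ (by linear_combination hcw)
  linear_combination (4 * hone - htwo) / 3 + 4 / 3 * I * c * X.F_sub_eq hw hw' hζ
    - (C.M w + schwarz C.H w' + C.L w * ζ) * hcw
    + 4 / 3 * I * I * c * schwarz C.J w' * hcw - 4 / 3 * I * schwarz C.J w' * r * c ^ 3 * I_sq

theorem eventually_norm_lt (X : PlaneNormalForm C q f g h e r) :
    ∀ᶠ w : ℂ in 𝓝 0, ‖w‖ < r ^ 3 / 8 := by
  have hpos := X.pos
  have hball := Metric.ball_mem_nhds (0 : ℂ) (by positivity : 0 < r ^ 3 / 8)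
  filter_upwards [hball] with w hw using mem_ball_zero_iff.1 hw

theorem exists_norm_lt_ne_ne (X : PlaneNormalForm C q f g h e r) (a b : ℂ) :
    ∃ w : ℂ, ‖w‖ < r ^ 3 / 8 ∧ w ≠ a ∧ w ≠ b := by
  obtain ⟨w, hw, hab⟩ := (infinite_of_mem_nhds 0 X.eventually_norm_lt).exists_notMem_finset {a, b}
  exact ⟨w, hw, by simpa using hab⟩

theorem norm_zero_lt (X : PlaneNormalForm C q f g h e r) : ‖(0 : ℂ)‖ < r ^ 3 / 8 :=
  X.eventually_norm_lt.self_of_nhds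

theorem eventually_norm_lt_radius (X : PlaneNormalForm C q f g h e r) :
    ∀ᶠ ζ : ℂ in 𝓝 0, ‖ζ‖ < r :=
  X.eventually_norm_lt.mono fun _ ↦ X.norm_lt_of_lt_cube

theorem F_K_N_eq (X : PlaneNormalForm C q f g h e r) {w : ℂ} (hw : ‖w‖ < r ^ 3 / 8) :
    C.F w = I * conj (C.J 0) * w ∧ C.K w = C.K 0 ∧ C.N w = C.N 0 := by
  have hJ : schwarz C.J 0 = conj (C.J 0) := by simp [schwarz]
  have hcoeff := coeff_eq_zero_of_sum_mul_pow_eventually_eq_zero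
    (c := ![C.F w - I * conj (C.J 0) * w, C.K w - C.K 0, C.N 0 - C.N w]) <| by
    filter_upwards [X.eventually_norm_lt_radius] with ζ hζ
    simp only [Fin.sum_univ_three, Matrix.cons_val, Fin.isValue, Fin.coe_ofNat_eq_mod]
    linear_combination X.F_sub_eq hw X.norm_zero_lt hζ + X.F_zero + I * w * hJ
  exact ⟨sub_eq_zero.1 (congrFun hcoeff 0), sub_eq_zero.1 (congrFun hcoeff 1),
    (sub_eq_zero.1 (congrFun hcoeff 2)).symm⟩

theorem J_eq (X : PlaneNormalForm C q f g h e r) {w : ℂ} (hw : ‖w‖ < r ^ 3 / 8) :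
    C.J w = C.J 0 := by
  obtain rfl | hw₀ := eq_or_ne w 0
  · rfl
  have hw' : ‖conj w‖ < r ^ 3 / 8 := by rwa [Complex.norm_conj]
  have hF := X.F_sub_eq (ζ := 0) X.norm_zero_lt hw' X.eventually_norm_lt_radius.self_of_nhds
  have hJ : schwarz C.J (conj w) = conj (C.J w) := schwarz_star C.J w
  refine (starRingEnd ℂ).injective (mul_left_cancel₀ (by simpa using hw₀ : I * conj w ≠ 0) ?_)
  linear_combination hF + (X.F_K_N_eq hw').1 - X.F_zero - I * conj w * hJ

theorem schwarz_F_eq (X : PlaneNormalForm C q f g h e r) {w : ℂ} (hw : ‖w‖ < r ^ 3 / 8) :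
    schwarz C.F w = -I * C.J 0 * w := by
  rw [schwarz, (X.F_K_N_eq (by rwa [norm_star])).1]
  simp

theorem E_sub_eq (X : PlaneNormalForm C q f g h e r) {w w' : ℂ} (hw : ‖w‖ < r ^ 3 / 8)
    (hw' : ‖w'‖ < r ^ 3 / 8) : C.E w - C.E w' = (w - w') * (C.M w + schwarz C.H w') := by
  linear_combination X.E_sub_add_eq (ζ := 0) hw hw' X.eventually_norm_lt_radius.self_of_nhds

theorem L_eq (X : PlaneNormalForm C q f g h e r) {w : ℂ} (hw : ‖w‖ < r ^ 3 / 8) :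
    C.L w = 2 * C.J 0 := by
  obtain ⟨w', hw', hne, -⟩ := X.exists_norm_lt_ne_ne w 0
  obtain ⟨ζ, hζ, hζ₀, -⟩ := X.exists_norm_lt_ne_ne 0 0
  refine mul_left_cancel₀ (mul_ne_zero (sub_ne_zero.2 hne.symm) hζ₀) ?_
  linear_combination X.E_sub_eq hw hw' - X.E_sub_add_eq hw hw' (X.norm_lt_of_lt_cube hζ)
    + 2 * I * ζ * (X.schwarz_F_eq hw - X.schwarz_F_eq hw') - 2 * C.J 0 * (w - w') * ζ * I_sq

theorem g_half_eq (X : PlaneNormalForm C q f g h e r) {w w' ζ : ℂ} (hw : ‖w‖ < r ^ 3 / 8)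
    (hw' : ‖w'‖ < r ^ 3 / 8) (hζ : ‖ζ‖ < r) (hne : w ≠ w') :
    g ![0, (r / 2 : ℂ), ζ, w] = r / 2 * (C.M w + C.L w * ζ - schwarz C.H w')
      + schwarz C.N w' * ζ + q w' * ζ ^ 2 := by
  refine mul_left_cancel₀ (mul_ne_zero two_ne_zero (sub_ne_zero.2 hne)) ?_
  linear_combination r * X.E_sub_add_eq hw hw' hζ - X.mul_E_sub_eq hw hw' hζ

theorem H_q_eq (X : PlaneNormalForm C q f g h e r) {w : ℂ} (hw : ‖w‖ < r ^ 3 / 8) :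
    schwarz C.H w = schwarz C.H 0 ∧ q w = q 0 := by
  obtain ⟨b, hb, hbw, hb₀⟩ := X.exists_norm_lt_ne_ne w 0
  have hr : (r / 2 : ℂ) ≠ 0 := by simp [X.pos.ne']
  have hcoeff := coeff_eq_zero_of_sum_mul_pow_eventually_eq_zero
    (c := ![r / 2 * (schwarz C.H 0 - schwarz C.H w), schwarz C.N w - schwarz C.N 0,
      q w - q 0]) <| by
    filter_upwards [X.eventually_norm_lt_radius] with ζ hζ
    simp only [Fin.sum_univ_three, Matrix.cons_val, Fin.isValue, Fin.coe_ofNat_eq_mod]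
    linear_combination X.g_half_eq hb X.norm_zero_lt hζ hb₀ - X.g_half_eq hb hw hζ hbw
  exact ⟨(sub_eq_zero.1 ((mul_eq_zero.1 (congrFun hcoeff 0)).resolve_left hr)).symm,
    sub_eq_zero.1 (congrFun hcoeff 2)⟩

theorem H_eq (X : PlaneNormalForm C q f g h e r) {w : ℂ} (hw : ‖w‖ < r ^ 3 / 8) :
    C.H w = C.H 0 := by
  refine (starRingEnd ℂ).injective ?_
  simpa [schwarz] using (X.H_q_eq (w := conj w) (by rwa [Complex.norm_conj])).1

theorem E_eq (X : PlaneNormalForm C q f g h e r) {w : ℂ} (hw : ‖w‖ < r ^ 3 / 8) :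
    C.E w = (C.M 0 + conj (C.H 0)) * w := by
  have hH : schwarz C.H 0 = conj (C.H 0) := by simp [schwarz]
  linear_combination X.E_zero - X.E_sub_eq X.norm_zero_lt hw + w * (X.H_q_eq hw).1 + w * hH

theorem M_eq (X : PlaneNormalForm C q f g h e r) {w : ℂ} (hw : ‖w‖ < r ^ 3 / 8) :
    C.M w = C.M 0 := by
  obtain rfl | hw₀ := eq_or_ne w 0
  · rfl
  have hH : schwarz C.H 0 = conj (C.H 0) := by simp [schwarz]
  refine mul_left_cancel₀ hw₀ ?_
  linear_combination X.E_eq hw - X.E_zero - X.E_sub_eq hw X.norm_zero_lt - w * hH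

theorem conj_M_add_conj_H (X : PlaneNormalForm C q f g h e r) :
    conj (C.M 0 + conj (C.H 0)) = C.M 0 + conj (C.H 0) := by
  obtain ⟨w, hw, hw₀, -⟩ := X.exists_norm_lt_ne_ne 0 0
  have hE := X.schwarz_E w (X.norm_lt_of_lt_cube hw)
  rw [schwarz, X.E_eq hw, X.E_eq (by rwa [norm_star]), map_mul] at hE
  exact mul_right_cancel₀ hw₀ (by simpa using hE)

theorem f_eq_constant_coeffs (X : PlaneNormalForm C q f g h e r) {p : E4}
    (hp : p ∈ Metric.ball 0 r) (hw : ‖p 3‖ < r ^ 3 / 8) :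
    f p = C.M 0 * p 0 + I * conj (C.J 0) * p 3 + C.K 0 * p 2 + 2 * C.J 0 * p 0 * p 2
      - C.N 0 * p 2 ^ 2 := by
  obtain ⟨hF, hK, hN⟩ := X.F_K_N_eq hw
  rw [X.f_eq p hp, NormalCoeffs.f, hF, hK, hN, X.M_eq hw, X.L_eq hw]
  ring

theorem h_eq_constant_coeffs (X : PlaneNormalForm C q f g h e r) {p : E4}
    (hp : p ∈ Metric.ball 0 r) (hw : ‖p 3‖ < r ^ 3 / 8) :
    h p = C.H 0 * p 2 + C.J 0 * p 2 ^ 2 := by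
  rw [X.h_eq p hp, NormalCoeffs.h, X.H_eq hw, X.J_eq hw]

theorem e_eq_constant_coeffs (X : PlaneNormalForm C q f g h e r) {p : E4}
    (hp : p ∈ Metric.ball 0 r) (hw : ‖p 3‖ < r ^ 3 / 8) :
    e p = (C.M 0 + conj (C.H 0)) * p 3 + 2 * C.J 0 * p 3 * p 2 := by
  rw [X.e_eq p hp, NormalCoeffs.e, X.E_eq hw, X.schwarz_F_eq hw]
  linear_combination -2 * C.J 0 * p 3 * p 2 * I_sq

theorem g_eq_constant_coeffs (X : PlaneNormalForm C q f g h e r) {p : E4}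
    (hp : p ∈ Metric.ball 0 r) (hw : ‖p 3‖ < r ^ 3 / 8) {c w' : ℂ} (hc : ‖c‖ < r) (hc₀ : c ≠ 0)
    (hw' : ‖w'‖ < r ^ 3 / 8) (hmem : p 3 - w' = 2 * I * (p 0 * c + p 1 * c ^ 2)) :
    g p = (C.M 0 - conj (C.H 0)) * p 1 + conj (C.J 0) * p 0 + conj (C.N 0) * p 2
      + 2 * C.J 0 * p 1 * p 2 + q 0 * p 2 ^ 2 := by
  have hnorm := norm_apply_lt_of_mem_ball_zero hp
  have hpoint := X.identity (hnorm 0) (hnorm 1) (hnorm 2) (hnorm 3) hc (X.norm_lt_of_lt_cube hw')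
    hmem
  have hpvec : ![p 0, p 1, p 2, p 3] = p := by
    ext i
    fin_cases i <;> rfl
  have hN : schwarz C.N w' = conj (C.N 0) := by
    rw [schwarz, (X.F_K_N_eq (by rwa [norm_star])).2.2]
  have hJ : schwarz C.J w' = conj (C.J 0) := by
    rw [schwarz, X.J_eq (by rwa [norm_star])]
  have hH : schwarz C.H w' = conj (C.H 0) := by
    rw [schwarz, X.H_eq (by rwa [norm_star])]
  obtain ⟨hF, hK, hN₀⟩ := X.F_K_N_eq hw
  obtain ⟨hF', hK', hN₀'⟩ := X.F_K_N_eq hw'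
  rw [hpvec, X.E_eq hw, X.E_eq hw', X.schwarz_F_eq hw, X.schwarz_F_eq hw', hF, hF', hK, hK', hN₀,
    hN₀', X.M_eq hw, X.L_eq hw, (X.H_q_eq hw').2, hN, hJ, hH] at hpoint
  refine mul_left_cancel₀ (by simpa using hc₀ : 2 * I * c ^ 2 ≠ 0) ?_
  linear_combination -hpoint + (C.M 0 + conj (C.H 0) - 2 * I ^ 2 * C.J 0 * p 2
      - 2 * I ^ 2 * c * conj (C.J 0)) * hmem
    - 4 * I * c * (C.J 0 * p 2 + c * conj (C.J 0)) * (p 0 + c * p 1) * I_sq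

theorem eventually_g_eq_constant_coeffs (X : PlaneNormalForm C q f g h e r) :
    ∀ᶠ p in 𝓝 0, g p = (C.M 0 - conj (C.H 0)) * p 1 + conj (C.J 0) * p 0 + conj (C.N 0) * p 2
      + 2 * C.J 0 * p 1 * p 2 + q 0 * p 2 ^ 2 := by
  let c : ℂ := r / 2
  have hc₀ : c ≠ 0 := by simp [c, X.pos.ne']
  have hc : ‖c‖ < r := by simpa [c, abs_of_pos X.pos] using X.pos
  have hw : Tendsto (fun p : E4 ↦ p 3) (𝓝 0) (𝓝 0) := (continuous_apply 3).tendsto 0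
  have hw' : Tendsto (fun p : E4 ↦ p 3 - 2 * I * (p 0 * c + p 1 * c ^ 2)) (𝓝 0) (𝓝 0) := by
    have hcont : Continuous fun p : E4 ↦ p 3 - 2 * I * (p 0 * c + p 1 * c ^ 2) := by fun_prop
    simpa using hcont.tendsto 0
  filter_upwards [Metric.ball_mem_nhds 0 X.pos, hw X.eventually_norm_lt, hw' X.eventually_norm_lt]
    with p hp hw hw'
  exact X.g_eq_constant_coeffs hp hw hc hc₀ hw' (by ring)

end PlaneNormalForm

/-! ### The model fields -/

theorem eq_I_mul_im_of_conj_eq_neg {z : ℂ} (hz : conj z = -z) : z = I * z.im := by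
  have hre : z.re = -z.re := congrArg re hz
  exact Complex.ext (by simpa using self_eq_neg.1 hre) (by simp)

/-- The parameters `(E, k, n, ψ, τ, m)` of the model fields, the polynomial 4-tuples tangent to `Q`
that vanish at the origin. -/
abbrev ModelParams : Type := ℝ × ℝ × ℝ × ℂ × ℂ × ℂ

/-- The component `f` of the model field with the given parameters. -/
noncomputable def modelF : ModelParams → E4 → ℂ := fun (E, k, _, ψ, τ, m) p ↦
  (E - ψ) * p 0 + I * conj τ * p 3 + I * k * p 2 + 2 * τ * p 0 * p 2 - conj m * p 2 ^ 2

/-- The component `g` of the model field with the given parameters. -/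
noncomputable def modelG : ModelParams → E4 → ℂ := fun (E, _, n, ψ, τ, m) p ↦
  (E - 2 * ψ) * p 1 + conj τ * p 0 + m * p 2 + 2 * τ * p 1 * p 2 + I * n * p 2 ^ 2

/-- The component `h` of the model field with the given parameters. -/
noncomputable def modelH : ModelParams → E4 → ℂ := fun (_, _, _, ψ, τ, _) p ↦
  conj ψ * p 2 + τ * p 2 ^ 2

/-- The component `e` of the model field with the given parameters. -/
noncomputable def modelE : ModelParams → E4 → ℂ := fun (E, _, _, _, τ, _) p ↦
  E * p 3 + 2 * τ * p 3 * p 2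

theorem PlaneNormalForm.exists_eventually_eq_model {C : NormalCoeffs} {q : ℂ → ℂ}
    {f g h e : E4 → ℂ} {r : ℝ} (X : PlaneNormalForm C q f g h e r) :
    ∃ t, f =ᶠ[𝓝 0] modelF t ∧ g =ᶠ[𝓝 0] modelG t ∧ h =ᶠ[𝓝 0] modelH t ∧ e =ᶠ[𝓝 0] modelE t := by
  have hr : ‖(0 : ℂ)‖ < r := X.eventually_norm_lt_radius.self_of_nhds
  have hE := conj_eq_iff_re.1 X.conj_M_add_conj_H
  have hK : C.K 0 = I * (C.K 0).im :=
    eq_I_mul_im_of_conj_eq_neg (by simpa [schwarz] using X.schwarz_K 0 hr)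
  have hq : q 0 = I * (q 0).im :=
    eq_I_mul_im_of_conj_eq_neg (by simpa [schwarz] using X.schwarz_q 0 hr)
  have hball := Metric.ball_mem_nhds (0 : E4) X.pos
  have hw : ∀ᶠ p : E4 in 𝓝 0, ‖p 3‖ < r ^ 3 / 8 :=
    ((continuous_apply 3).tendsto (0 : E4)).eventually X.eventually_norm_lt
  refine ⟨((C.M 0 + conj (C.H 0)).re, (C.K 0).im, (q 0).im, conj (C.H 0), C.J 0, conj (C.N 0)),
    ?_, ?_, ?_, ?_⟩
  · filter_upwards [hball, hw] with p hp hw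
    rw [X.f_eq_constant_coeffs hp hw, modelF, hE, ← hK, conj_conj]
    ring
  · filter_upwards [X.eventually_g_eq_constant_coeffs] with p hp
    rw [hp, modelG, hE, ← hq]
    ring
  · filter_upwards [hball, hw] with p hp hw
    rw [X.h_eq_constant_coeffs hp hw, modelH, conj_conj]
  · filter_upwards [hball, hw] with p hp hw
    rw [X.e_eq_constant_coeffs hp hw, modelE, hE]

theorem exists_polarTangentOn {f g h e : E4 → ℂ}
    (hf : ∀ᶠ p in 𝓝 0, DifferentiableAt ℂ f p) (hg : ∀ᶠ p in 𝓝 0, DifferentiableAt ℂ g p)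
    (hh : ∀ᶠ p in 𝓝 0, DifferentiableAt ℂ h p) (he : ∀ᶠ p in 𝓝 0, DifferentiableAt ℂ e p)
    (htangent : ∀ᶠ p in 𝓝 0, p ∈ Q → polarDefect f g h e p (star p) = 0) :
    ∃ r, PolarTangentOn f g h e r := by
  have hpolar := eventually_polarDefect_eq_zero hf hg hh he htangent
  have hschwarz := ((eventually_differentiableAt_schwarz hf).and
    (eventually_differentiableAt_schwarz hg)).and ((eventually_differentiableAt_schwarz hh).and
      (eventually_differentiableAt_schwarz he))
  obtain ⟨r₁, hr₁, hball₁⟩ := Metric.eventually_nhds_iff_ball.1 hpolar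
  obtain ⟨r₂, hr₂, hball₂⟩ := Metric.eventually_nhds_iff_ball.1 hschwarz
  let r := min (min r₁ r₂) 1
  have hle₁ : r ≤ r₁ := (min_le_left _ _).trans (min_le_left _ _)
  have hle₂ : r ≤ r₂ := (min_le_left _ _).trans (min_le_right _ _)
  have hdiff (p) (hp : p ∈ Metric.ball 0 r) := hball₂ p (Metric.ball_subset_ball hle₂ hp)
  refine ⟨r, {
    pos := lt_min (lt_min hr₁ hr₂) one_pos
    le_one := min_le_right _ _
    differentiableAt_f := fun p hp ↦ (hdiff p hp).1.1
    differentiableAt_g := fun p hp ↦ (hdiff p hp).1.2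
    differentiableAt_h := fun p hp ↦ (hdiff p hp).2.1
    differentiableAt_e := fun p hp ↦ (hdiff p hp).2.2
    polarDefect_eq_zero := fun p hp q hq ↦ hball₁ (p, q) ?_ }⟩
  exact Metric.ball_subset_ball hle₁ ((ball_prod_same (0 : E4) 0 r).subset ⟨hp, hq⟩)

theorem polarDefect_model (E k n : ℝ) (ψ τ m : ℂ) (p q : E4) :
    polarDefect (modelF (E, k, n, ψ, τ, m)) (modelG (E, k, n, ψ, τ, m))
        (modelH (E, k, n, ψ, τ, m)) (modelE (E, k, n, ψ, τ, m)) p q =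
      (E + 2 * (τ * p 2 + conj τ * q 2)) * (p 3 - q 3 - 2 * I * polarForm p q) := by
  simp only [polarDefect, polarForm, modelF, modelG, modelH, modelE, schwarz, Pi.star_apply,
    RCLike.star_def, map_add, map_sub, map_mul, map_pow, map_ofNat, conj_ofReal, conj_I, conj_conj]
  linear_combination 2 * (τ * q 3 * p 2 - conj τ * p 3 * q 2) * I_sq

theorem tangentOn_model (t : ModelParams) :
    TangentOn (modelF t) (modelG t) (modelH t) (modelE t) Set.univ := by
  obtain ⟨E, k, n, ψ, τ, m⟩ := t
  refine tangentOn_iff.2 fun p hp ↦ ?_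
  rw [polarDefect_model, sub_eq_zero.2 (mem_Q_iff.1 hp.1), mul_zero]

/-- The real linear map sending parameters to the germ at `0` of the model field. -/
noncomputable def modelGerm : ModelParams →ₗ[ℝ] G4 × G4 × G4 × G4 where
  toFun t := (↑(modelF t), ↑(modelG t), ↑(modelH t), ↑(modelE t))
  map_add' s t := by
    have hf : modelF (s + t) = modelF s + modelF t := by
      funext p
      simp only [modelF, ofReal_add, map_add, Pi.add_apply]
      ring
    have hg : modelG (s + t) = modelG s + modelG t := by
      funext p
      simp only [modelG, ofReal_add, map_add, Pi.add_apply]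
      ring
    have hh : modelH (s + t) = modelH s + modelH t := by
      funext p
      simp only [modelH, map_add, Pi.add_apply]
      ring
    have he : modelE (s + t) = modelE s + modelE t := by
      funext p
      simp only [modelE, ofReal_add, Pi.add_apply]
      ring
    rw [hf, hg, hh, he]
    rfl
  map_smul' s t := by
    have hf : modelF (s • t) = s • modelF t := by
      funext p
      simp only [modelF, Prod.smul_fst, Prod.smul_snd, Pi.smul_apply, smul_eq_mul, real_smul,
        ofReal_mul, map_mul, conj_ofReal]
      ring
    have hg : modelG (s • t) = s • modelG t := by
      funext p
      simp only [modelG, Prod.smul_fst, Prod.smul_snd, Pi.smul_apply, smul_eq_mul, real_smul,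
        ofReal_mul, map_mul, conj_ofReal]
      ring
    have hh : modelH (s • t) = s • modelH t := by
      funext p
      simp only [modelH, Prod.smul_fst, Prod.smul_snd, Pi.smul_apply, real_smul, map_mul,
        conj_ofReal]
      ring
    have he : modelE (s • t) = s • modelE t := by
      funext p
      simp only [modelE, Prod.smul_fst, Prod.smul_snd, Pi.smul_apply, smul_eq_mul, real_smul,
        ofReal_mul]
      ring
    rw [hf, hg, hh, he]
    rfl

theorem modelGerm_mem_tangentGerms0 (t : ModelParams) : modelGerm t ∈ tangentGerms0 := by
  refine ⟨modelF t, modelG t, modelH t, modelE t, rfl, by simp [modelF], by simp [modelG],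
    by simp [modelH], by simp [modelE], Set.univ, isOpen_univ, trivial, ?_, ?_, ?_, ?_,
    tangentOn_model t⟩
  · unfold modelF; fun_prop
  · unfold modelG; fun_prop
  · unfold modelH; fun_prop
  · unfold modelE; fun_prop

theorem modelGerm_injective : Function.Injective modelGerm := by
  refine (injective_iff_map_eq_zero modelGerm).2 fun t ht ↦ ?_
  obtain ⟨E, k, n, ψ, τ, m⟩ := t
  have hf : modelF (E, k, n, ψ, τ, m) =ᶠ[𝓝 0] 0 := Filter.Germ.coe_eq.1 (congrArg (·.1) ht)
  have hg : modelG (E, k, n, ψ, τ, m) =ᶠ[𝓝 0] 0 := Filter.Germ.coe_eq.1 (congrArg (·.2.1) ht)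
  have hh : modelH (E, k, n, ψ, τ, m) =ᶠ[𝓝 0] 0 := Filter.Germ.coe_eq.1 (congrArg (·.2.2.1) ht)
  have he : modelE (E, k, n, ψ, τ, m) =ᶠ[𝓝 0] 0 := Filter.Germ.coe_eq.1 (congrArg (·.2.2.2) ht)
  have hζ : Tendsto (fun x ↦ ![0, 0, x, 0] : ℂ → E4) (𝓝 0) (𝓝 0) :=
    Continuous.tendsto' (by fun_prop) _ _ (by simp)
  have hw : Tendsto (fun x ↦ ![0, 0, 0, x] : ℂ → E4) (𝓝 0) (𝓝 0) :=
    Continuous.tendsto' (by fun_prop) _ _ (by simp)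
  have hfζ := coeff_eq_zero_of_sum_mul_pow_eventually_eq_zero (c := ![0, I * k, -conj m]) <|
    (hζ.eventually hf).mono fun x hx ↦ by
      simpa [modelF, Fin.sum_univ_three, sub_eq_add_neg] using hx
  have hgζ := coeff_eq_zero_of_sum_mul_pow_eventually_eq_zero (c := ![0, m, I * n]) <|
    (hζ.eventually hg).mono fun x hx ↦ by simpa [modelG, Fin.sum_univ_three] using hx
  have hhζ := coeff_eq_zero_of_sum_mul_pow_eventually_eq_zero (c := ![0, conj ψ, τ]) <|
    (hζ.eventually hh).mono fun x hx ↦ by simpa [modelH, Fin.sum_univ_three] using hx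
  have hew := coeff_eq_zero_of_sum_mul_pow_eventually_eq_zero (c := ![0, (E : ℂ)]) <|
    (hw.eventually he).mono fun x hx ↦ by simpa [modelE, Fin.sum_univ_two] using hx
  have hk : k = 0 := by simpa using congrFun hfζ 1
  have hm : m = 0 := by simpa using congrFun hgζ 1
  have hn : n = 0 := by simpa using congrFun hgζ 2
  have hψ : ψ = 0 := by simpa using congrFun hhζ 1
  have hτ : τ = 0 := by simpa using congrFun hhζ 2
  have hE : E = 0 := by simpa using congrFun hew 1
  rw [hE, hk, hn, hψ, hτ, hm]
  rfl

theorem rank_range_modelGerm : Module.rank ℝ (LinearMap.range modelGerm) = 9 := by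
  rw [← (LinearEquiv.ofInjective modelGerm modelGerm_injective).rank_eq, ← Module.finrank_eq_rank]
  simp [ModelParams, Module.finrank_prod, Complex.finrank_real_complex]

theorem eventually_eq_model_of_tangentOn {f g h e : E4 → ℂ} {V : Set E4} (hV : V ∈ 𝓝 0)
    (hf : DifferentiableOn ℂ f V) (hg : DifferentiableOn ℂ g V) (hh : DifferentiableOn ℂ h V)
    (he : DifferentiableOn ℂ e V) (htangent : TangentOn f g h e V) (hf₀ : f 0 = 0)
    (hg₀ : g 0 = 0) (hh₀ : h 0 = 0) (he₀ : e 0 = 0) :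
    ∃ t, f =ᶠ[𝓝 0] modelF t ∧ g =ᶠ[𝓝 0] modelG t ∧ h =ᶠ[𝓝 0] modelH t ∧ e =ᶠ[𝓝 0] modelE t := by
  obtain ⟨r, H⟩ := exists_polarTangentOn (hf.eventually_differentiableAt hV)
    (hg.eventually_differentiableAt hV) (hh.eventually_differentiableAt hV)
    (he.eventually_differentiableAt hV)
    (eventually_of_mem hV fun p hp hpQ ↦ tangentOn_iff.1 htangent p ⟨hpQ, hp⟩)
  obtain ⟨C, X⟩ := H.exists_firstOrderForm hf₀ hg₀ hh₀ he₀
  obtain ⟨q, Y⟩ := X.exists_planeNormalForm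
  exact Y.exists_eventually_eq_model

/-- Theorem 15(b): the space of germs at `0` of holomorphic 4-tuples tangent to `Q`
near `0` and vanishing at `0` (the stabilizer of the origin in `aut Q`) has real
dimension exactly 9. -/
theorem stmt_9 :
    ∃ W : Submodule ℝ (G4 × G4 × G4 × G4),
      (W : Set (G4 × G4 × G4 × G4)) = tangentGerms0 ∧ Module.rank ℝ ↥W = 9 := by
  refine ⟨LinearMap.range modelGerm, Set.Subset.antisymm ?_ ?_, rank_range_modelGerm⟩
  · rintro _ ⟨t, rfl⟩
    exact modelGerm_mem_tangentGerms0 t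
  · rintro _ ⟨f, g, h, e, rfl, hf₀, hg₀, hh₀, he₀, V, hV, hV₀, hf, hg, hh, he, htangent⟩
    obtain ⟨t, hft, hgt, hht, het⟩ := eventually_eq_model_of_tangentOn (hV.mem_nhds hV₀) hf hg hh he
      htangent hf₀ hg₀ hh₀ he₀
    refine ⟨t, ?_⟩
    rw [Filter.Germ.coe_eq.2 hft, Filter.Germ.coe_eq.2 hgt, Filter.Germ.coe_eq.2 hht,
      Filter.Germ.coe_eq.2 het]
    rfl
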